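/- Define the 6-bit xorshift step f : BitVec 3 × BitVec 3 → BitVec 3 × BitVec 3 with shifts a = 1, b = 2, c = 1 by f (x, y) = (y, (t ^^^ (t >>> 2)) ^^^ (y ^^^ (y >>> 1))) where t = x ^^^ (x <<< 1). Then f has full period: for every state s ≠ (0, 0), the least p > 0 such that f^[p] s = s is p = 63 = 2^6 - 1. -/

import Mathlib

/-- The 6-bit xorshift step with 3-bit shifts `a = 1, b = 2, c = 1`. -/
def xorshiftStep (s : BitVec 3 × BitVec 3) : BitVec 3 × BitVec 3 :=
  let t := s.1 ^^^ (s.1 <<< 1)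
  (s.2, (t ^^^ (t >>> 2)) ^^^ (s.2 ^^^ (s.2 >>> 1)))

/-!
Over `ZMod 2` the step is multiplication of a row vector by a `6 × 6` matrix whose characteristic
polynomial `X ^ 6 + X ^ 5 + X ^ 3 + X ^ 2 + 1` divides the cyclotomic polynomial `Φ₆₃`. By
Cayley–Hamilton `Φ₆₃` annihilates the matrix. As `63` is odd, `X ^ 63 - 1` is separable, so `Φ₆₃` is
coprime to `X ^ d - 1` for every proper divisor `d` of `63`; hence no nonzero vector is fixed by the
`d`-th power of the matrix.
-/

open Function Matrix Polynomial

section LinearDynamics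

variable {K V : Type*} [Field K] [AddCommGroup V] [Module K V]

theorem isCoprime_X_pow_sub_one_cyclotomic {n d : ℕ} (hn : (n : K) ≠ 0)
    (hd : d ∈ n.properDivisors) : IsCoprime (X ^ d - 1 : K[X]) (cyclotomic n K) :=
  ((X_pow_sub_one_separable_iff.2 hn).of_dvd
    (X_pow_sub_one_mul_cyclotomic_dvd_X_pow_sub_one_of_dvd K hd)).isCoprime

theorem isPeriodicPt_iff_aeval_X_pow_sub_one_apply_eq_zero {R M : Type*} [CommRing R]
    [AddCommGroup M] [Module R M] (T : Module.End R M) (n : ℕ) (v : M) :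
    IsPeriodicPt T n v ↔ aeval T (X ^ n - 1 : R[X]) v = 0 := by
  simp [IsPeriodicPt, IsFixedPt, Module.End.pow_apply, sub_eq_zero]

theorem minimalPeriod_eq_of_aeval_cyclotomic_apply_eq_zero {T : Module.End K V} {n : ℕ}
    (hn : (n : K) ≠ 0) {v : V} (hv : v ≠ 0) (hT : aeval T (cyclotomic n K) v = 0) :
    minimalPeriod T v = n := by
  have periodic : IsPeriodicPt T n v := by
    obtain ⟨q, hq⟩ := cyclotomic.dvd_X_pow_sub_one n K
    rw [isPeriodicPt_iff_aeval_X_pow_sub_one_apply_eq_zero, hq, mul_comm, map_mul,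
      Module.End.mul_apply, hT, map_zero]
  by_contra hne
  have proper : minimalPeriod T v ∈ n.properDivisors :=
    Nat.mem_properDivisors.2 ⟨periodic.minimalPeriod_dvd,
      (periodic.minimalPeriod_le (Nat.pos_of_ne_zero (by rintro rfl; simp at hn))).lt_of_ne hne⟩
  have hker : v ∈ (aeval T (X ^ minimalPeriod T v - 1 : K[X])).ker :=
    (isPeriodicPt_iff_aeval_X_pow_sub_one_apply_eq_zero T _ v).1 (isPeriodicPt_minimalPeriod T v)
  exact hv <| Submodule.disjoint_def.1
    (disjoint_ker_aeval_of_isCoprime T (isCoprime_X_pow_sub_one_cyclotomic hn proper)) v hker hT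

theorem minimalPeriod_vecMul_of_charpoly_dvd_cyclotomic {m : Type*} [Fintype m] [DecidableEq m]
    {M : Matrix m m K} {n : ℕ} (hn : (n : K) ≠ 0) (hM : M.charpoly ∣ cyclotomic n K)
    {v : m → K} (hv : v ≠ 0) : minimalPeriod (· ᵥ* M) v = n := by
  have annihilated : aeval M.vecMulLinear (cyclotomic n K) = 0 := by
    refine aeval_eq_zero_of_dvd_aeval_eq_zero hM ?_
    rw [← mulVecLin_transpose, ← charpoly_transpose, ← charpoly_mulVecLin]
    exact LinearMap.aeval_self_charpoly _
  refine minimalPeriod_eq_of_aeval_cyclotomic_apply_eq_zero (T := M.vecMulLinear) hn hv ?_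
  rw [annihilated, LinearMap.zero_apply]

end LinearDynamics

theorem minimalPeriod_apply_of_semiconj_of_injective {α β : Type*} {f : α → α} {g : β → β}
    {φ : α → β} (hφ : Injective φ) (h : Semiconj φ f g) (x : α) :
    minimalPeriod g (φ x) = minimalPeriod f x :=
  minimalPeriod_eq_minimalPeriod_iff.2 fun n => by
    rw [IsPeriodicPt, IsFixedPt, ← h.iterate_right n x, hφ.eq_iff, IsPeriodicPt, IsFixedPt]

theorem charpoly_fromBlocks_zero_one {n R : Type*} [Fintype n] [DecidableEq n] [CommRing R]
    (A B : Matrix n n R) :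
    (fromBlocks 0 A 1 B).charpoly = ((X : R[X]) • charmatrix B - A.map C).det := by
  -- Adding `X - 1` times the second block row to the first creates an identity block.
  have shear : fromBlocks 1 (((X : R[X]) - 1) • 1) 0 1 * charmatrix (fromBlocks 0 A 1 B) =
      fromBlocks 1 (((X : R[X]) - 1) • charmatrix B - A.map C) (-1) (charmatrix B) := by
    have hX : charmatrix (0 : Matrix n n R) = (X : R[X]) • 1 := by
      simp [charmatrix, smul_one_eq_diagonal]
    have hone : (1 : Matrix n n R).map C = 1 := by simp
    rw [charmatrix_fromBlocks, fromBlocks_multiply, hX, hone]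
    congr 1 <;> simp [sub_smul, sub_mul, neg_add_eq_sub]
  calc (fromBlocks 0 A 1 B).charpoly
      = (fromBlocks 1 (((X : R[X]) - 1) • 1) 0 1 * charmatrix (fromBlocks 0 A 1 B)).det := by
        rw [det_mul, det_fromBlocks_zero₂₁, det_one, one_mul, one_mul, charpoly]
    _ = ((X : R[X]) • charmatrix B - A.map C).det := by
        rw [shear, det_fromBlocks_one₁₁]
        congr 1
        rw [sub_smul, one_smul, neg_one_mul]
        abel

theorem cyclotomic_twenty_one (R : Type*) [CommRing R] :
    cyclotomic 21 R = X ^ 12 - X ^ 11 + X ^ 9 - X ^ 8 + X ^ 6 - X ^ 4 + X ^ 3 - X + 1 := by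
  have h := cyclotomic_expand_eq_cyclotomic_mul (p := 7) (n := 3) (by norm_num) (by norm_num) R
  refine (cyclotomic.monic 3 R).isRegular.right ?_
  change cyclotomic (3 * 7) R * _ = _
  rw [← h]
  simp only [cyclotomic_three, map_add, map_pow, expand_X, map_one]
  ring

theorem cyclotomic_sixty_three (R : Type*) [CommRing R] :
    cyclotomic 63 R =
      X ^ 36 - X ^ 33 + X ^ 27 - X ^ 24 + X ^ 18 - X ^ 12 + X ^ 9 - X ^ 3 + 1 := by
  rw [← cyclotomic_expand_eq_cyclotomic (p := 3) (n := 21) Nat.prime_three (by norm_num),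
    cyclotomic_twenty_one]
  simp only [map_add, map_sub, map_pow, expand_X, map_one]
  ring

theorem cyclotomic_sixty_three_zmod_two :
    cyclotomic 63 (ZMod 2) = (X ^ 6 + X ^ 5 + X ^ 3 + X ^ 2 + 1) *
      (X ^ 30 + X ^ 29 + X ^ 28 + X ^ 27 + X ^ 26 + X ^ 25 + X ^ 23 + X ^ 21 + X ^ 20 + X ^ 19 +
        X ^ 18 + X ^ 15 + X ^ 14 + X ^ 12 + X ^ 11 + X ^ 8 + X ^ 4 + X ^ 2 + 1) := by
  rw [cyclotomic_sixty_three]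
  grind

section Xorshift

variable {w : ℕ}

/-- The word `x` as a row vector over `ZMod 2`, least significant bit first, so that xor becomes
addition. -/
def bits (x : BitVec w) : Fin w → ZMod 2 :=
  fun i => if x[i] then 1 else 0

theorem bits_injective : Injective (bits (w := w)) := by
  intro x y h
  ext i hi
  have hbit : (if x[i] then 1 else 0 : ZMod 2) = if y[i] then 1 else 0 := congrFun h ⟨i, hi⟩
  cases hx : x[i] <;> cases hy : y[i] <;> simp_all

theorem bits_zero : bits (0#w) = 0 := by
  ext i
  simp [bits]

theorem bits_xor (x y : BitVec w) : bits (x ^^^ y) = bits x + bits y := by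
  ext i
  simp only [bits, Fin.getElem_fin, BitVec.getElem_xor, Pi.add_apply]
  cases x[i] <;> cases y[i] <;> decide

/-- The paper's `L`, shifting a word left by one. Row vectors list the least significant bit first,
so the ones lie on the superdiagonal. -/
def leftShiftMatrix (w : ℕ) : Matrix (Fin w) (Fin w) (ZMod 2) :=
  of fun i j => if (i : ℕ) + 1 = j then 1 else 0

/-- The paper's `R`, shifting a word right by one. -/
def rightShiftMatrix (w : ℕ) : Matrix (Fin w) (Fin w) (ZMod 2) :=
  of fun i j => if (i : ℕ) = j + 1 then 1 else 0

theorem bits_shiftLeft_one (x : BitVec w) : bits (x <<< 1) = bits x ᵥ* leftShiftMatrix w := by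
  ext ⟨j, hj⟩
  cases j with
  | zero => simp [bits, vecMul, dotProduct, leftShiftMatrix]
  | succ j =>
    rw [vecMul, dotProduct, Finset.sum_eq_single ⟨j, by lia⟩] <;>
      simp +contextual [bits, leftShiftMatrix, Fin.ext_iff]

theorem bits_ushiftRight_one (x : BitVec w) : bits (x >>> 1) = bits x ᵥ* rightShiftMatrix w := by
  ext ⟨j, hj⟩
  by_cases hj' : j + 1 < w
  · rw [vecMul, dotProduct, Finset.sum_eq_single ⟨j + 1, hj'⟩] <;>
      simp +contextual [bits, rightShiftMatrix, Fin.ext_iff, add_comm 1 j, hj']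
  · rw [vecMul, dotProduct, Finset.sum_eq_zero fun i _ => ?_]
    · simp [bits, add_comm 1 j, BitVec.getLsbD_of_ge x (j + 1) (not_lt.1 hj')]
    · simp [rightShiftMatrix, show (i : ℕ) ≠ j + 1 by lia]

theorem bits_shiftLeft (x : BitVec w) (k : ℕ) :
    bits (x <<< k) = bits x ᵥ* leftShiftMatrix w ^ k := by
  induction k with
  | zero => simp
  | succ k ih => rw [BitVec.shiftLeft_add, bits_shiftLeft_one, ih, vecMul_vecMul, pow_succ]

theorem bits_ushiftRight (x : BitVec w) (k : ℕ) :
    bits (x >>> k) = bits x ᵥ* rightShiftMatrix w ^ k := by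
  induction k with
  | zero => simp
  | succ k ih => rw [BitVec.shiftRight_add, bits_ushiftRight_one, ih, vecMul_vecMul, pow_succ]

theorem bits_xor_shiftLeft (x : BitVec w) (k : ℕ) :
    bits (x ^^^ (x <<< k)) = bits x ᵥ* (1 + leftShiftMatrix w ^ k) := by
  rw [bits_xor, bits_shiftLeft, vecMul_add, vecMul_one]

theorem bits_xor_ushiftRight (x : BitVec w) (k : ℕ) :
    bits (x ^^^ (x >>> k)) = bits x ᵥ* (1 + rightShiftMatrix w ^ k) := by
  rw [bits_xor, bits_ushiftRight, vecMul_add, vecMul_one]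

/-- The generator state `(v₀, v₁)` as a single row vector, on which a step acts by a matrix. -/
def stateBits (s : BitVec w × BitVec w) : Fin w ⊕ Fin w → ZMod 2 :=
  Sum.elim (bits s.1) (bits s.2)

theorem stateBits_injective : Injective (stateBits (w := w)) := by
  intro s t h
  obtain ⟨h₁, h₂⟩ := Sum.elim_eq_iff.1 h
  exact Prod.ext (bits_injective h₁) (bits_injective h₂)

theorem stateBits_zero : stateBits (0#w, 0#w) = 0 := by
  rw [stateBits, bits_zero, Sum.elim_zero_zero]

/-- The matrix of the row-vector update
`(v₀, v₁) ↦ (v₁, v₀ (1 + L ^ a) (1 + R ^ b) + v₁ (1 + R ^ c))` on words of `w` bits. -/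
def xorshiftMatrix (w a b c : ℕ) : Matrix (Fin w ⊕ Fin w) (Fin w ⊕ Fin w) (ZMod 2) :=
  fromBlocks 0 ((1 + leftShiftMatrix w ^ a) * (1 + rightShiftMatrix w ^ b))
    1 (1 + rightShiftMatrix w ^ c)

end Xorshift

theorem semiconj_stateBits_xorshiftStep :
    Semiconj stateBits xorshiftStep (· ᵥ* xorshiftMatrix 3 1 2 1) := by
  intro s
  simp only [xorshiftStep, stateBits, xorshiftMatrix, vecMul_fromBlocks, Sum.elim_comp_inl,
    Sum.elim_comp_inr, vecMul_zero, vecMul_one, zero_add, ← vecMul_vecMul]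
  rw [bits_xor, bits_xor_ushiftRight, bits_xor_ushiftRight, bits_xor_shiftLeft]

theorem charpoly_xorshiftMatrix_three_one_two_one :
    (xorshiftMatrix 3 1 2 1).charpoly = X ^ 6 + X ^ 5 + X ^ 3 + X ^ 2 + 1 := by
  have hA : (1 + leftShiftMatrix 3 ^ 1) * (1 + rightShiftMatrix 3 ^ 2) =
      !![1, 1, 0; 1, 1, 1; 1, 0, 1] := by decide
  have hB : 1 + rightShiftMatrix 3 ^ 1 = !![1, 0, 0; 1, 1, 0; 0, 1, 1] := by decide
  have hentries : (X : (ZMod 2)[X]) • charmatrix !![1, 0, 0; 1, 1, 0; 0, 1, 1] -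
      (!![1, 1, 0; 1, 1, 1; 1, 0, 1] : Matrix (Fin 3) (Fin 3) (ZMod 2)).map C =
      !![X ^ 2 - X - 1, -1, 0; -X - 1, X ^ 2 - X - 1, -1; -1, -X, X ^ 2 - X - 1] := by
    ext1 i j
    fin_cases i <;> fin_cases j <;> simp <;> ring
  rw [xorshiftMatrix, hA, hB, charpoly_fromBlocks_zero_one, hentries, det_fin_three]
  simp only [of_apply, cons_val', cons_val_zero, cons_val_one, cons_val, cons_val_fin_one]
  grind

theorem minimalPeriod_xorshiftStep {s : BitVec 3 × BitVec 3} (hs : s ≠ (0, 0)) :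
    minimalPeriod xorshiftStep s = 63 := by
  have nonzero : stateBits s ≠ 0 := stateBits_zero (w := 3) ▸ stateBits_injective.ne hs
  rw [← minimalPeriod_apply_of_semiconj_of_injective stateBits_injective
    semiconj_stateBits_xorshiftStep]
  refine minimalPeriod_vecMul_of_charpoly_dvd_cyclotomic (by decide) ?_ nonzero
  rw [charpoly_xorshiftMatrix_three_one_two_one]
  exact Dvd.intro _ cyclotomic_sixty_three_zmod_two.symm

/-- The 6-bit xorshift generator with shifts `a = 1, b = 2, c = 1` has full
period: for every nonzero state `s`, the least `p > 0` with `f^[p] s = s` is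
`63 = 2^6 - 1`. -/
theorem xorshift6_full_period :
    ∀ s : BitVec 3 × BitVec 3, s ≠ (0, 0) →
      IsLeast {p : ℕ | 0 < p ∧ xorshiftStep^[p] s = s} 63 := by
  intro s hs
  have period := minimalPeriod_xorshiftStep hs
  exact ⟨⟨by norm_num, period ▸ iterate_minimalPeriod⟩,
    fun p hp => period ▸ IsPeriodicPt.minimalPeriod_le hp.1 hp.2⟩
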